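/- Let G be a simple cycle on ℓ ≥ 3 vertices with positive edge weights, and let w(C) denote its total edge weight. Then there exists an ordering d of its vertices with val(d) ≥ w(C)·(1 − (1 − f(ℓ−1))/ℓ). (Such an ordering is obtained by deleting a minimum-weight edge e of the cycle and listing the vertices along the remaining Hamiltonian path, so that all edges except e are realized at distance 1 and e is realized at distance ℓ−1.) -/

import Mathlib

open Classical in
/-- The Ext-TSP value of an ordering `d` of the vertices of `G`. -/
noncomputable def extVal {V : Type} [Fintype V] (G : SimpleGraph V)
    (w : V → V → ℝ) (f : ℕ → ℝ) (d : V ≃ Fin (Fintype.card V)) : ℝ :=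
  (1 / 2) * ∑ u : V, ∑ v : V,
    if G.Adj u v then f (Nat.dist (d u) (d v)) * w u v else 0

/-!
Deleting one edge of a cycle and listing the vertices along the remaining Hamiltonian path realizes
the deleted edge at distance `ℓ - 1` and every other edge at distance `1`, so its value is
`f 1 * W - (f 1 - f (ℓ - 1)) * x`, where `W` is the total weight and `x` the weight of the deleted
edge. Some edge weighs at most the average `W / ℓ`, and deleting it gives the bound.
-/

/-- The total edge weight of `G` for a symmetric `w`. Each edge occurs as two ordered pairs, hence
the factor `1 / 2`. -/
noncomputable def totalWeight {V : Type*} [Fintype V] (G : SimpleGraph V) [DecidableRel G.Adj]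
    (w : V → V → ℝ) : ℝ :=
  (1 / 2) * ∑ u : V, ∑ v : V, if G.Adj u v then w u v else 0

/-- The labelling `e` presents `G` as the cycle `e 0, e 1, …, e (ℓ - 1)`. This is a simple
cycle only for `3 ≤ ℓ`: when `ℓ = 2` the two edges collapse to one. -/
def IsCyclicLabelling {V : Type*} (G : SimpleGraph V) {ℓ : ℕ} (e : ZMod ℓ ≃ V) : Prop :=
  ∀ i j : ZMod ℓ, G.Adj (e i) (e j) ↔ j = i + 1 ∨ i = j + 1

lemma dist_zmod_val_val_add_one {ℓ : ℕ} [NeZero ℓ] (i : ZMod ℓ) :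
    Nat.dist i.val (i + 1).val = if i = -1 then ℓ - 1 else 1 := by
  obtain ⟨n, rfl⟩ := Nat.exists_eq_succ_of_ne_zero (NeZero.ne ℓ)
  have h_last : (-1 : ZMod (n + 1)) = Fin.last n := ZMod.val_injective _ (ZMod.val_neg_one n)
  split_ifs with hi
  · rw [hi, neg_add_cancel, ZMod.val_zero, ZMod.val_neg_one, Nat.dist_zero_right,
      Nat.succ_sub_one]
  · have h_succ : (i + 1).val = i.val + 1 := (Fin.val_add_one i).trans (if_neg (h_last ▸ hi))
    rw [h_succ, Nat.dist_eq_sub_of_le (Nat.le_succ _), Nat.succ_sub (le_refl _), Nat.sub_self]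

section Ordering

variable {V : Type*} [Fintype V] {ℓ : ℕ} [NeZero ℓ]

/-- The ordering `e 0, e 1, …, e (ℓ - 1)` of the vertices, which cuts the cycle between `e (-1)`
and `e 0`. -/
def pathOrdering (e : ZMod ℓ ≃ V) : V ≃ Fin (Fintype.card V) :=
  e.symm.trans <| (ZMod.finEquiv ℓ).symm.toEquiv.trans <|
    finCongr <| (ZMod.card ℓ).symm.trans (Fintype.card_congr e)

lemma val_pathOrdering_apply (e : ZMod ℓ ≃ V) (i : ZMod ℓ) :
    (pathOrdering e (e i) : ℕ) = i.val := by
  obtain ⟨n, rfl⟩ := Nat.exists_eq_succ_of_ne_zero (NeZero.ne ℓ)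
  simp only [pathOrdering, Equiv.trans_apply, Equiv.symm_apply_apply, finCongr_apply, Fin.val_cast]
  rfl

lemma dist_pathOrdering_add_one (e : ZMod ℓ ≃ V) (i : ZMod ℓ) :
    Nat.dist (pathOrdering e (e i)) (pathOrdering e (e (i + 1))) =
      if i = -1 then ℓ - 1 else 1 := by
  rw [val_pathOrdering_apply, val_pathOrdering_apply, dist_zmod_val_val_add_one]

end Ordering

lemma sum_ite_eq_mul {ι R : Type*} [Fintype ι] [DecidableEq ι] [CommRing R] (a b : R) (c : ι)
    (x : ι → R) :
    ∑ i, (if i = c then b else a) * x i = a * ∑ i, x i - (a - b) * x c := by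
  have h_term (i : ι) :
      (if i = c then b else a) * x i = a * x i - if i = c then (a - b) * x i else 0 := by
    split_ifs <;> ring
  simp only [h_term, Finset.sum_sub_distrib, ← Finset.mul_sum, Finset.sum_ite_eq',
    Finset.mem_univ, if_true]

namespace IsCyclicLabelling

variable {V : Type*} {G : SimpleGraph V} {ℓ : ℕ} {e : ZMod ℓ ≃ V}

lemma rotate (he : IsCyclicLabelling G e) (c : ZMod ℓ) :
    IsCyclicLabelling G ((Equiv.addRight c).trans e) := fun i j => by
  simp only [Equiv.trans_apply, Equiv.coe_addRight, he _ _, add_right_comm _ c 1, add_left_inj]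

variable [Fintype V] [NeZero ℓ]

lemma sum_adj [DecidableRel G.Adj] {M : Type*} [AddCommMonoid M]
    (he : IsCyclicLabelling G e) (hℓ : 3 ≤ ℓ) (g : V → V → M) :
    ∑ u, ∑ v, (if G.Adj u v then g u v else 0) =
      ∑ i, g (e i) (e (i + 1)) + ∑ i, g (e (i + 1)) (e i) := by
  have h_two : (2 : ZMod ℓ) ≠ 0 := by
    have : ¬ ℓ ∣ 2 := Nat.not_dvd_of_pos_of_lt two_pos hℓ
    exact_mod_cast (ZMod.natCast_eq_zero_iff 2 ℓ).not.2 this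
  have h_split (i j : ZMod ℓ) : (if G.Adj (e i) (e j) then g (e i) (e j) else 0) =
      (if j = i + 1 then g (e i) (e j) else 0) + (if i = j + 1 then g (e i) (e j) else 0) := by
    by_cases hj : j = i + 1
    · have hi : i ≠ j + 1 := fun hi => h_two (by linear_combination -hj - hi)
      rw [if_pos ((he i j).2 (.inl hj)), if_pos hj, if_neg hi, add_zero]
    · simp only [he i j, hj, false_or, if_false, zero_add]
  calc ∑ u, ∑ v, (if G.Adj u v then g u v else 0)
      = ∑ i, ∑ j, (if G.Adj (e i) (e j) then g (e i) (e j) else 0) := by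
        simp only [← e.sum_comp]
    _ = ∑ i, ∑ j, (if j = i + 1 then g (e i) (e j) else 0) +
          ∑ j, ∑ i, (if i = j + 1 then g (e i) (e j) else 0) := by
        simp only [h_split, Finset.sum_add_distrib]
        exact congrArg _ Finset.sum_comm
    _ = ∑ i, g (e i) (e (i + 1)) + ∑ i, g (e (i + 1)) (e i) := by
        simp only [Finset.sum_ite_eq', Finset.mem_univ, if_true]

lemma totalWeight_eq_sum [DecidableRel G.Adj] (he : IsCyclicLabelling G e) (hℓ : 3 ≤ ℓ)
    {w : V → V → ℝ} (hw : ∀ u v, w u v = w v u) :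
    totalWeight G w = ∑ i, w (e i) (e (i + 1)) := by
  rw [totalWeight, he.sum_adj hℓ]
  simp only [fun i => hw (e (i + 1)) (e i)]
  ring

open scoped BigOperators in
lemma exists_weight_le_average [DecidableRel G.Adj] (he : IsCyclicLabelling G e) (hℓ : 3 ≤ ℓ)
    {w : V → V → ℝ} (hw : ∀ u v, w u v = w v u) :
    ∃ c, w (e c) (e (c + 1)) ≤ totalWeight G w / ℓ := by
  have h_mean : 𝔼 i, w (e i) (e (i + 1)) = totalWeight G w / ℓ := by
    rw [Fintype.expect_eq_sum_div_card, ZMod.card, he.totalWeight_eq_sum hℓ hw]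
  obtain ⟨c, -, hc⟩ := Finset.exists_le_of_expect_le Finset.univ_nonempty h_mean.le
  exact ⟨c, hc⟩

end IsCyclicLabelling

lemma extVal_eq_totalWeight {V : Type} [Fintype V] (G : SimpleGraph V) [DecidableRel G.Adj]
    (w : V → V → ℝ) (f : ℕ → ℝ) (d : V ≃ Fin (Fintype.card V)) :
    extVal G w f d = totalWeight G fun u v => f (Nat.dist (d u) (d v)) * w u v := by
  unfold extVal totalWeight
  congr!

lemma IsCyclicLabelling.extVal_pathOrdering {V : Type} [Fintype V] {G : SimpleGraph V}
    [DecidableRel G.Adj] {ℓ : ℕ} [NeZero ℓ] {e : ZMod ℓ ≃ V} (he : IsCyclicLabelling G e)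
    (hℓ : 3 ≤ ℓ) {w : V → V → ℝ} (hw : ∀ u v, w u v = w v u) (f : ℕ → ℝ) :
    extVal G w f (pathOrdering e) =
      f 1 * totalWeight G w - (f 1 - f (ℓ - 1)) * w (e (-1)) (e 0) := by
  rw [extVal_eq_totalWeight,
    he.totalWeight_eq_sum hℓ fun u v => by rw [Nat.dist_comm, hw],
    he.totalWeight_eq_sum hℓ hw]
  simp only [dist_pathOrdering_add_one, apply_ite f, sum_ite_eq_mul, neg_add_cancel]

theorem extTSP_cycle_lower_bound_general {V : Type} [Fintype V]
    (G : SimpleGraph V) [DecidableRel G.Adj] (ℓ : ℕ) (hℓ : 3 ≤ ℓ) (e : ZMod ℓ ≃ V)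
    (he : IsCyclicLabelling G e) (w : V → V → ℝ) (hw_symm : ∀ u v, w u v = w v u)
    (f : ℕ → ℝ) (hf : f (ℓ - 1) ≤ f 1) :
    ∃ d : V ≃ Fin (Fintype.card V),
      extVal G w f d ≥ totalWeight G w * (f 1 - (f 1 - f (ℓ - 1)) / ℓ) := by
  have : NeZero ℓ := ⟨by omega⟩
  obtain ⟨c, hc⟩ := he.exists_weight_le_average hℓ hw_symm
  let e' : ZMod ℓ ≃ V := (Equiv.addRight (c + 1)).trans e
  have h_cut : w (e' (-1)) (e' 0) = w (e c) (e (c + 1)) := by simp [e']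
  refine ⟨pathOrdering e', ?_⟩
  calc extVal G w f (pathOrdering e')
      = f 1 * totalWeight G w - (f 1 - f (ℓ - 1)) * w (e c) (e (c + 1)) := by
        rw [(he.rotate (c + 1)).extVal_pathOrdering hℓ hw_symm, h_cut]
    _ ≥ f 1 * totalWeight G w - (f 1 - f (ℓ - 1)) * (totalWeight G w / ℓ) := by
        gcongr
    _ = totalWeight G w * (f 1 - (f 1 - f (ℓ - 1)) / ℓ) := by ring

/-- If `G` is a simple cycle on `ℓ ≥ 3` vertices with positive edge
weights, then some ordering `d` of its vertices has
`val(d) ≥ w(C)·(1 - (1 - f(ℓ-1))/ℓ)`, where `w(C)` is the total edge weight.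
(Delete a minimum-weight edge and list the vertices along the remaining Hamiltonian path.) -/
theorem extTSP_cycle_lower_bound {V : Type} [Fintype V] [DecidableEq V]
    (G : SimpleGraph V) [DecidableRel G.Adj]
    (ℓ : ℕ) (hℓ : 3 ≤ ℓ) (e : ZMod ℓ ≃ V)
    (he : ∀ i j : ZMod ℓ, G.Adj (e i) (e j) ↔ j = i + 1 ∨ i = j + 1)
    (w : V → V → ℝ) (hw_symm : ∀ u v, w u v = w v u)
    (hw_pos : ∀ u v, G.Adj u v → 0 < w u v)
    (k : ℕ) (hk : 1 ≤ k)
    (f : ℕ → ℝ) (hf_nonneg : ∀ i, 0 ≤ f i) (hf_mono : Antitone f)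
    (hf_one : f 1 = 1) (hf_zero : ∀ i, k < i → f i = 0) :
    ∃ d : V ≃ Fin (Fintype.card V),
      extVal G w f d ≥
        ((1 / 2) * ∑ u : V, ∑ v : V, if G.Adj u v then w u v else 0) *
          (1 - (1 - f (ℓ - 1)) / (ℓ : ℝ)) := by
  simpa only [totalWeight, hf_one] using
    extTSP_cycle_lower_bound_general G ℓ hℓ e he w hw_symm f (hf_mono (by omega))
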